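/- arXiv:2601.22855 — 2 statements merged into one kernel-verified Lean document; each statement's English description precedes it below -/
import Mathlib

section
/- Fix α ∈ (0,1) and reals ℓ1, ℓ2, ℓ3 ≥ 1 with ℓ1 ≤ ℓ2. Define the vector field F = (F1,F3) on ℝ² by F1(w1,w3) = w1·(1−w1)·(ℓ3·(α−w1) + (ℓ2−ℓ1)·w3)/D(w1,w3) and F3(w1,w3) = w3·(ℓ2·(1−α)·w1 + ℓ1·α·(1−w1) − ℓ3·w1·(1−w1) − w3·(ℓ1 + w1·(ℓ2−ℓ1)))/D(w1,w3), where D(w1,w3) = w3·(ℓ1 + w1·(ℓ2−ℓ1)) + ℓ3·w1·(1−w1) (with the convention that F1 and F3 are 0 at points where D vanishes). Let y : [0,∞) → [0,1]² be differentiable with y′(t) = F(y(t)) for all t ≥ 0. Then lim_{t→∞} y(t) exists. -/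
open Filter



namespace Ants

open Filter Set

/-- Convergence from the absence of oscillation across a dense set of levels. -/
lemma conv_of_levels (f : ℝ → ℝ) (s : Set ℝ) (hs : Dense s) (A B : ℝ) (T : ℝ)
    (hb : ∀ t, T ≤ t → A ≤ f t ∧ f t ≤ B)
    (h : ∀ l ∈ s, (∃ T', ∀ t, T' ≤ t → f t ≤ l) ∨ (∃ T', ∀ t, T' ≤ t → l ≤ f t)) :
    ∃ p, Tendsto f atTop (nhds p) := by
  refine tendsto_of_no_upcrossings hs ?_ ?_ ?_
  · rintro a ha b hb hab ⟨h1, h2⟩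
    rcases h a ha with ⟨T', hT⟩ | ⟨T', hT⟩
    · obtain ⟨t, ht, h3⟩ := (h2.and_eventually (eventually_ge_atTop T')).exists
      have := hT t h3
      linarith
    · obtain ⟨t, ht, h3⟩ := (h1.and_eventually (eventually_ge_atTop T')).exists
      have := hT t h3
      linarith
  · exact ⟨B, by
      simp only [eventually_map]
      filter_upwards [eventually_ge_atTop T] with t ht using (hb t ht).2⟩
  · exact ⟨A, by
      simp only [eventually_map]
      filter_upwards [eventually_ge_atTop T] with t ht using (hb t ht).1⟩

/-- Monotonicity from a signed one-sided derivative. -/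
lemma mono_of_deriv (f f' : ℝ → ℝ) (T : ℝ)
    (hf : ∀ t, T ≤ t → HasDerivWithinAt f (f' t) (Ici T) t)
    (h : ∀ t, T ≤ t → 0 ≤ f' t) : ∀ s t, T ≤ s → s ≤ t → f s ≤ f t := by
  have : MonotoneOn f (Ici T) := by
    refine monotoneOn_of_hasDerivWithinAt_nonneg (f' := f') (convex_Ici T)
      (fun t ht => (hf t ht).continuousWithinAt) ?_ ?_
    · intro t ht
      exact (hf t (interior_subset ht)).mono interior_subset
    · intro t ht
      exact h t (interior_subset ht)
  intro s t hs hst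
  exact this hs (hs.trans hst) hst

lemma conv_of_deriv_nonneg (f f' : ℝ → ℝ) (T A B : ℝ)
    (hf : ∀ t, T ≤ t → HasDerivWithinAt f (f' t) (Ici T) t)
    (hb : ∀ t, T ≤ t → A ≤ f t ∧ f t ≤ B)
    (h : ∀ t, T ≤ t → 0 ≤ f' t) : ∃ p, Tendsto f atTop (nhds p) := by
  have hm := mono_of_deriv f f' T hf h
  refine conv_of_levels f univ dense_univ A B T hb ?_
  intro l _
  by_cases hl : ∃ a, T ≤ a ∧ l ≤ f a
  · obtain ⟨a, ha, hla⟩ := hl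
    exact Or.inr ⟨a, fun t ht => hla.trans (hm a t ha ht)⟩
  · push Not at hl
    exact Or.inl ⟨T, fun t ht => (hl t ht).le⟩

lemma conv_of_neg {f : ℝ → ℝ} (h : ∃ p, Tendsto (fun t => - f t) atTop (nhds p)) :
    ∃ p, Tendsto f atTop (nhds p) := by
  obtain ⟨p, hp⟩ := h
  exact ⟨-p, by simpa using hp.neg⟩

lemma conv_of_deriv_nonpos (f f' : ℝ → ℝ) (T A B : ℝ)
    (hf : ∀ t, T ≤ t → HasDerivWithinAt f (f' t) (Ici T) t)
    (hb : ∀ t, T ≤ t → A ≤ f t ∧ f t ≤ B)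
    (h : ∀ t, T ≤ t → f' t ≤ 0) : ∃ p, Tendsto f atTop (nhds p) := by
  apply conv_of_neg
  refine conv_of_deriv_nonneg (fun t => - f t) (fun t => - f' t) T (-B) (-A)
    (fun t ht => (hf t ht).fun_neg) ?_ ?_
  · intro t ht
    have := hb t ht
    constructor <;> linarith
  · intro t ht
    have := h t ht
    linarith

/-- A level at which the derivative is positive cannot be crossed downwards. -/
lemma level_pos (f f' : ℝ → ℝ) (T l a : ℝ)
    (hf : ∀ t, T ≤ t → HasDerivWithinAt f (f' t) (Ici T) t)
    (h : ∀ t, a ≤ t → f t = l → 0 < f' t) (ha : T ≤ a) (hla : l ≤ f a) :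
    ∀ t, a ≤ t → l ≤ f t := by
  intro t ht
  refine image_le_of_deriv_right_lt_deriv_boundary' (f := fun _ => l) (f' := fun _ => 0)
    (B := f) (B' := f') (a := a) (b := t) continuousOn_const
    (fun x _ => hasDerivWithinAt_const _ _ _) hla ?_ ?_ ?_ ⟨ht, le_rfl⟩
  · intro u hu
    exact (hf u (ha.trans hu.1)).continuousWithinAt.mono (fun w hw => ha.trans hw.1)
  · intro u hu
    exact (hf u (ha.trans hu.1)).mono (fun w hw => (ha.trans hu.1).trans hw)
  · intro u hu he
    exact h u hu.1 he.symm

lemma level_neg (f f' : ℝ → ℝ) (T l a : ℝ)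
    (hf : ∀ t, T ≤ t → HasDerivWithinAt f (f' t) (Ici T) t)
    (h : ∀ t, a ≤ t → f t = l → f' t < 0) (ha : T ≤ a) (hla : f a ≤ l) :
    ∀ t, a ≤ t → f t ≤ l := by
  intro t ht
  have := level_pos (fun t => - f t) (fun t => - f' t) T (-l) a
    (fun t ht => (hf t ht).fun_neg)
    (fun t ht he => by have := h t ht (by linarith); linarith) ha (by linarith) t ht
  linarith

/-- Convergence when, at each level of a dense set, the derivative eventually has a strict sign. -/
lemma conv_of_sign (f f' : ℝ → ℝ) (T A B : ℝ) (s : Set ℝ) (hs : Dense s)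
    (hf : ∀ t, T ≤ t → HasDerivWithinAt f (f' t) (Ici T) t)
    (hb : ∀ t, T ≤ t → A ≤ f t ∧ f t ≤ B)
    (h : ∀ l ∈ s, (∀ᶠ t in atTop, f t = l → 0 < f' t) ∨ (∀ᶠ t in atTop, f t = l → f' t < 0)) :
    ∃ p, Tendsto f atTop (nhds p) := by
  refine conv_of_levels f s hs A B T hb ?_
  intro l hl
  rcases h l hl with h | h
  · obtain ⟨T', hT'⟩ := eventually_atTop.1 h
    by_cases hc : ∃ a, max T T' ≤ a ∧ l ≤ f a
    · obtain ⟨a, ha, hla⟩ := hc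
      exact Or.inr ⟨a, level_pos f f' T l a hf
        (fun t ht => hT' t ((le_max_right _ _).trans (ha.trans ht)))
        ((le_max_left _ _).trans ha) hla⟩
    · push Not at hc
      exact Or.inl ⟨_, fun t ht => (hc t ht).le⟩
  · obtain ⟨T', hT'⟩ := eventually_atTop.1 h
    by_cases hc : ∃ a, max T T' ≤ a ∧ f a ≤ l
    · obtain ⟨a, ha, hla⟩ := hc
      exact Or.inl ⟨a, level_neg f f' T l a hf
        (fun t ht => hT' t ((le_max_right _ _).trans (ha.trans ht)))
        ((le_max_left _ _).trans ha) hla⟩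
    · push Not at hc
      exact Or.inr ⟨_, fun t ht => (hc t ht).le⟩

/-- One-sided Gronwall bound: `f' ≥ -M f` implies that `exp (M t) f` is nondecreasing. -/
lemma exp_mono (f f' : ℝ → ℝ) (T M : ℝ)
    (hf : ∀ t, T ≤ t → HasDerivWithinAt f (f' t) (Ici T) t)
    (h : ∀ t, T ≤ t → -M * f t ≤ f' t) :
    ∀ s t, T ≤ s → s ≤ t → Real.exp (M * s) * f s ≤ Real.exp (M * t) * f t := by
  refine mono_of_deriv (fun t => Real.exp (M * t) * f t)
    (fun t => (Real.exp (M * t) * (M * 1)) * f t + Real.exp (M * t) * f' t) T ?_ ?_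
  · intro t ht
    have h1 : HasDerivAt (fun t : ℝ => Real.exp (M * t)) (Real.exp (M * t) * (M * 1)) t :=
      ((hasDerivAt_id t).const_mul M).exp
    exact h1.hasDerivWithinAt.mul (hf t ht)
  · intro t ht
    have h1 := h t ht
    have h2 := Real.exp_pos (M * t)
    have : (Real.exp (M * t) * (M * 1)) * f t + Real.exp (M * t) * f' t
      = Real.exp (M * t) * (M * f t + f' t) := by ring
    rw [this]
    apply mul_nonneg h2.le
    linarith

lemma stay_pos (f f' : ℝ → ℝ) (T M a : ℝ)
    (hf : ∀ t, T ≤ t → HasDerivWithinAt f (f' t) (Ici T) t)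
    (h : ∀ t, T ≤ t → -M * f t ≤ f' t) (ha : T ≤ a) (h0 : 0 < f a) :
    ∀ t, a ≤ t → 0 < f t := by
  intro t ht
  have h1 := exp_mono f f' T M hf h a t ha ht
  have h2 : 0 < Real.exp (M * a) * f a := mul_pos (Real.exp_pos _) h0
  exact pos_of_mul_pos_right (h2.trans_le h1) (Real.exp_pos _).le

lemma stay_nonneg (f f' : ℝ → ℝ) (T M a : ℝ)
    (hf : ∀ t, T ≤ t → HasDerivWithinAt f (f' t) (Ici T) t)
    (h : ∀ t, T ≤ t → -M * f t ≤ f' t) (ha : T ≤ a) (h0 : 0 ≤ f a) :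
    ∀ t, a ≤ t → 0 ≤ f t := by
  intro t ht
  have h1 := exp_mono f f' T M hf h a t ha ht
  have h2 : 0 ≤ Real.exp (M * a) * f a := mul_nonneg (Real.exp_pos _).le h0
  exact nonneg_of_mul_nonneg_right (h2.trans h1) (Real.exp_pos _)

lemma conv_of_deriv_nonpos' (f f' : ℝ → ℝ) (T A : ℝ)
    (hf : ∀ t, T ≤ t → HasDerivWithinAt f (f' t) (Ici T) t)
    (hb : ∀ t, T ≤ t → A ≤ f t)
    (h : ∀ t, T ≤ t → f' t ≤ 0) : ∃ p, Tendsto f atTop (nhds p) := by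
  have hm := mono_of_deriv (fun t => - f t) (fun t => - f' t) T
    (fun t ht => (hf t ht).fun_neg) (fun t ht => by have := h t ht; linarith)
  refine conv_of_deriv_nonpos f f' T A (f T) hf (fun t ht => ⟨hb t ht, ?_⟩) h
  have := hm T t le_rfl ht
  linarith

/-- The common denominator. -/
def den (l1 m l3 x z : ℝ) : ℝ := z * (l1 + x * m) + l3 * (x * (1 - x))

/-- The function whose sign is the sign of the first component of the field. -/
def vv (a m l3 x z : ℝ) : ℝ := l3 * (a - x) + m * z

/-- The affine source term of the second component. -/
def src (a l1 m x : ℝ) : ℝ := (l1 + m) * (1 - a) * x + l1 * a * (1 - x)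

/-- Solutions on `[T,∞)` along which the denominator stays away from zero. -/
structure Sol (a l1 m l3 T d : ℝ) (x z : ℝ → ℝ) : Prop where
  ha0 : 0 < a
  ha1 : a < 1
  hl1 : 1 ≤ l1
  hm : 0 ≤ m
  hl3 : 1 ≤ l3
  hd : 0 < d
  hx0 : ∀ t, T ≤ t → 0 ≤ x t
  hx1 : ∀ t, T ≤ t → x t ≤ 1
  hz0 : ∀ t, T ≤ t → 0 ≤ z t
  hz1 : ∀ t, T ≤ t → z t ≤ 1
  hden : ∀ t, T ≤ t → d ≤ den l1 m l3 (x t) (z t)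
  dx : ∀ t, T ≤ t → HasDerivWithinAt x
    (x t * (1 - x t) * vv a m l3 (x t) (z t) / den l1 m l3 (x t) (z t)) (Ici T) t
  dz : ∀ t, T ≤ t → HasDerivWithinAt z
    (z t * (src a l1 m (x t) - den l1 m l3 (x t) (z t)) / den l1 m l3 (x t) (z t)) (Ici T) t

lemma Sol.later {a l1 m l3 T d : ℝ} {x z : ℝ → ℝ} (h : Sol a l1 m l3 T d x z) {T' : ℝ}
    (hT : T ≤ T') : Sol a l1 m l3 T' d x z where
  ha0 := h.ha0
  ha1 := h.ha1
  hl1 := h.hl1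
  hm := h.hm
  hl3 := h.hl3
  hd := h.hd
  hx0 := fun t ht => h.hx0 t (hT.trans ht)
  hx1 := fun t ht => h.hx1 t (hT.trans ht)
  hz0 := fun t ht => h.hz0 t (hT.trans ht)
  hz1 := fun t ht => h.hz1 t (hT.trans ht)
  hden := fun t ht => h.hden t (hT.trans ht)
  dx := fun t ht => (h.dx t (hT.trans ht)).mono (Ici_subset_Ici.2 hT)
  dz := fun t ht => (h.dz t (hT.trans ht)).mono (Ici_subset_Ici.2 hT)

lemma Sol.dpos {a l1 m l3 T d : ℝ} {x z : ℝ → ℝ} (h : Sol a l1 m l3 T d x z) :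
    ∀ t, T ≤ t → 0 < den l1 m l3 (x t) (z t) :=
  fun t ht => h.hd.trans_le (h.hden t ht)

/-- If the first coordinate converges, so does the second. -/
lemma Sol.conv_z {a l1 m l3 T d : ℝ} {x z : ℝ → ℝ} (h : Sol a l1 m l3 T d x z)
    (hx : ∃ p, Tendsto x atTop (nhds p)) : ∃ p, Tendsto z atTop (nhds p) := by
  obtain ⟨p, hp⟩ := hx
  have hm := h.hm
  have hl1 := h.hl1
  have hp0 : 0 ≤ p := ge_of_tendsto hp (by
    filter_upwards [eventually_ge_atTop T] with t ht using h.hx0 t ht)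
  have hL : 0 < l1 + p * m := by positivity
  set r := (src a l1 m p - l3 * (p * (1 - p))) / (l1 + p * m) with hr
  refine conv_of_sign z _ T 0 1 ({0, r}ᶜ) ?_ h.dz
    (fun t ht => ⟨h.hz0 t ht, h.hz1 t ht⟩) ?_
  · exact (Set.Finite.countable (by simp)).dense_compl ℝ
  · intro l hl
    have hl0 : l ≠ 0 := fun h => hl (by simp [h])
    have hlr : l ≠ r := fun h => hl (by simp [h])
    rcases lt_or_gt_of_ne hl0 with hl0 | hl0
    · left
      filter_upwards [eventually_ge_atTop T] with t ht he
      have := h.hz0 t ht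
      linarith
    have hcont : Tendsto (fun t => src a l1 m (x t) - den l1 m l3 (x t) l) atTop
        (nhds (src a l1 m p - den l1 m l3 p l)) := by
      have : Continuous (fun x => src a l1 m x - den l1 m l3 x l) := by
        unfold src den; fun_prop
      exact (this.tendsto p).comp hp
    have hval : src a l1 m p - den l1 m l3 p l = (l1 + p * m) * (r - l) := by
      rw [hr]; unfold den; field_simp; ring
    rcases lt_or_gt_of_ne hlr with hlr | hlr
    · left
      have hpos : 0 < src a l1 m p - den l1 m l3 p l := by
        rw [hval]; exact mul_pos hL (by linarith)
      filter_upwards [eventually_ge_atTop T, hcont.eventually (lt_mem_nhds hpos)] with t ht h1 he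
      have h2 := h.dpos t ht
      rw [he] at h2 ⊢
      positivity
    · right
      have hneg : src a l1 m p - den l1 m l3 p l < 0 := by
        rw [hval]; exact mul_neg_of_pos_of_neg hL (by linarith)
      filter_upwards [eventually_ge_atTop T, hcont.eventually (gt_mem_nhds hneg)] with t ht h1 he
      have h2 := h.dpos t ht
      rw [he] at h2 ⊢
      exact div_neg_of_neg_of_pos (mul_neg_of_pos_of_neg hl0 h1) h2

/-- The decoupled case: `m z` vanishes identically. -/
lemma Sol.conv_x_decoupled {a l1 m l3 T d : ℝ} {x z : ℝ → ℝ} (h : Sol a l1 m l3 T d x z)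
    (hmz : ∀ t, T ≤ t → m * z t = 0) : ∃ p, Tendsto x atTop (nhds p) := by
  have hl3 := h.hl3
  refine conv_of_sign x _ T 0 1 ({0, 1, a}ᶜ) ?_ h.dx
    (fun t ht => ⟨h.hx0 t ht, h.hx1 t ht⟩) ?_
  · exact (Set.Finite.countable (by simp)).dense_compl ℝ
  · intro l hl
    have hl0 : l ≠ 0 := fun h => hl (by simp [h])
    have hl1 : l ≠ 1 := fun h => hl (by simp [h])
    have hla : l ≠ a := fun h => hl (by simp [h])
    rcases lt_or_gt_of_ne hl0 with hl0 | hl0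
    · left
      filter_upwards [eventually_ge_atTop T] with t ht he
      have := h.hx0 t ht
      linarith
    rcases lt_or_gt_of_ne hl1 with hl1 | hl1
    swap
    · left
      filter_upwards [eventually_ge_atTop T] with t ht he
      have := h.hx1 t ht
      linarith
    have hb : 0 < l * (1 - l) := mul_pos hl0 (by linarith)
    rcases lt_or_gt_of_ne hla with hla | hla
    · left
      filter_upwards [eventually_ge_atTop T] with t ht he
      have h2 := h.dpos t ht
      have h3 : 0 < vv a m l3 (x t) (z t) := by
        unfold vv; rw [hmz t ht, he, add_zero]; exact mul_pos (by linarith) (by linarith)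
      rw [he] at h2 h3 ⊢
      positivity
    · right
      filter_upwards [eventually_ge_atTop T] with t ht he
      have h2 := h.dpos t ht
      have h3 : vv a m l3 (x t) (z t) < 0 := by
        unfold vv; rw [hmz t ht, he, add_zero]
        exact mul_neg_of_pos_of_neg (by linarith) (by linarith)
      rw [he] at h2 h3 ⊢
      exact div_neg_of_neg_of_pos (mul_neg_of_pos_of_neg hb h3) h2

/-- The affine function governing the evolution of `v`. -/
def ee (a l1 m l3 x : ℝ) : ℝ :=
  l1 * a * (m + l3) - (l1 * a * (m + l3) + (1 - a) * (l1 + m) * (l3 - m)) * x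

lemma Sol.dv {a l1 m l3 T d : ℝ} {x z : ℝ → ℝ} (h : Sol a l1 m l3 T d x z) :
    ∀ t, T ≤ t → HasDerivWithinAt (fun t => vv a m l3 (x t) (z t))
      (z t * ee a l1 m l3 (x t) / den l1 m l3 (x t) (z t) - vv a m l3 (x t) (z t)) (Ici T) t := by
  intro t ht
  have h1 := (((h.dx t ht).const_sub a).const_mul l3).add ((h.dz t ht).const_mul m)
  unfold vv
  refine h1.congr_deriv ?_
  have h2 := h.dpos t ht
  field_simp
  unfold vv src ee den
  ring

/-- If `v` has a one-sided sign trap, the first coordinate is eventually monotone. -/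
lemma Sol.conv_x_of_ee_nonneg {a l1 m l3 T d : ℝ} {x z : ℝ → ℝ} (h : Sol a l1 m l3 T d x z)
    (he : ∀ t, T ≤ t → 0 ≤ ee a l1 m l3 (x t)) : ∃ p, Tendsto x atTop (nhds p) := by
  by_cases hc : ∃ s, T ≤ s ∧ 0 ≤ vv a m l3 (x s) (z s)
  · obtain ⟨s, hs, hv⟩ := hc
    have hv' := stay_nonneg _ _ T 1 s h.dv (by
      intro t ht
      have h1 := h.dpos t ht
      have h2 := h.hz0 t ht
      have h3 := he t ht
      have : 0 ≤ z t * ee a l1 m l3 (x t) / den l1 m l3 (x t) (z t) := by positivity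
      linarith) hs hv
    have h' := h.later hs
    refine conv_of_deriv_nonneg x _ s 0 1 h'.dx (fun t ht => ⟨h'.hx0 t ht, h'.hx1 t ht⟩) ?_
    intro t ht
    have h1 := h'.dpos t ht
    have h2 := h'.hx0 t ht
    have h3 : 0 ≤ 1 - x t := by linarith [h'.hx1 t ht]
    have h4 := hv' t ht
    positivity
  · push Not at hc
    refine conv_of_deriv_nonpos x _ T 0 1 h.dx (fun t ht => ⟨h.hx0 t ht, h.hx1 t ht⟩) ?_
    intro t ht
    have h1 := h.dpos t ht
    have h2 := h.hx0 t ht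
    have h3 : 0 ≤ 1 - x t := by linarith [h.hx1 t ht]
    exact div_nonpos_of_nonpos_of_nonneg
      (mul_nonpos_of_nonneg_of_nonpos (mul_nonneg h2 h3) (hc t ht).le) h1.le

lemma Sol.conv_x_of_ee_nonpos {a l1 m l3 T d : ℝ} {x z : ℝ → ℝ} (h : Sol a l1 m l3 T d x z)
    (he : ∀ t, T ≤ t → ee a l1 m l3 (x t) ≤ 0) : ∃ p, Tendsto x atTop (nhds p) := by
  by_cases hc : ∃ s, T ≤ s ∧ vv a m l3 (x s) (z s) ≤ 0
  · obtain ⟨s, hs, hv⟩ := hc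
    have hv' := stay_nonneg _ _ T 1 s (fun t ht => (h.dv t ht).fun_neg) (by
      intro t ht
      have h1 := h.dpos t ht
      have h2 := h.hz0 t ht
      have h3 := he t ht
      have : z t * ee a l1 m l3 (x t) / den l1 m l3 (x t) (z t) ≤ 0 :=
        div_nonpos_of_nonpos_of_nonneg (mul_nonpos_of_nonneg_of_nonpos h2 h3) h1.le
      linarith) hs (by linarith)
    have h' := h.later hs
    refine conv_of_deriv_nonpos x _ s 0 1 h'.dx (fun t ht => ⟨h'.hx0 t ht, h'.hx1 t ht⟩) ?_
    intro t ht
    have h1 := h'.dpos t ht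
    have h2 := h'.hx0 t ht
    have h3 : 0 ≤ 1 - x t := by linarith [h'.hx1 t ht]
    have h4 := hv' t ht
    exact div_nonpos_of_nonpos_of_nonneg
      (mul_nonpos_of_nonneg_of_nonpos (mul_nonneg h2 h3) (by linarith)) h1.le
  · push Not at hc
    refine conv_of_deriv_nonneg x _ T 0 1 h.dx (fun t ht => ⟨h.hx0 t ht, h.hx1 t ht⟩) ?_
    intro t ht
    have h1 := h.dpos t ht
    have h2 := h.hx0 t ht
    have h3 : 0 ≤ 1 - x t := by linarith [h.hx1 t ht]
    have h4 := (hc t ht).le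
    positivity

/-- Long third side: `l3 ≥ l1 + l2`. -/
lemma Sol.conv_x_long {a l1 m l3 T d : ℝ} {x z : ℝ → ℝ} (h : Sol a l1 m l3 T d x z)
    (hm : 0 < m) (hz : ∀ t, T ≤ t → 0 < z t) (hl : l1 + (l1 + m) ≤ l3) :
    ∃ p, Tendsto x atTop (nhds p) := by
  have ha0 := h.ha0
  have ha1 : 0 < 1 - a := by linarith [h.ha1]
  have hl1 := h.hl1
  have hl3 := h.hl3
  by_cases hc : ∃ s, T ≤ s ∧ a ≤ x s
  · obtain ⟨s, hs, hv⟩ := hc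
    have hge := level_pos x _ T a s h.dx (by
      intro t ht he
      have h1 := h.dpos t (hs.trans ht)
      have h2 := hz t (hs.trans ht)
      have h3 : 0 < vv a m l3 (x t) (z t) := by
        unfold vv; rw [he]
        have := mul_pos hm h2
        linarith
      rw [he] at h1 h3 ⊢
      positivity) hs hv
    refine (h.later hs).conv_x_of_ee_nonpos ?_
    intro t ht
    have h1 := hge t ht
    have hcc : 0 ≤ l1 * a * (m + l3) + (1 - a) * (l1 + m) * (l3 - m) := by
      have : 0 ≤ l3 - m := by linarith
      positivity
    have h2 : ee a l1 m l3 a ≤ 0 := by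
      have : ee a l1 m l3 a = m * (a * (1 - a)) * (l1 + (l1 + m) - l3) := by unfold ee; ring
      rw [this]
      exact mul_nonpos_of_nonneg_of_nonpos (by positivity) (by linarith)
    have h3 := mul_le_mul_of_nonneg_left h1 hcc
    unfold ee at h2 ⊢
    linarith
  · push Not at hc
    refine conv_of_deriv_nonneg x _ T 0 1 h.dx (fun t ht => ⟨h.hx0 t ht, h.hx1 t ht⟩) ?_
    intro t ht
    have h1 := h.dpos t ht
    have h2 := h.hx0 t ht
    have h3 : 0 ≤ 1 - x t := by linarith [h.hx1 t ht]
    have h4 : 0 ≤ vv a m l3 (x t) (z t) := by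
      unfold vv
      have := hc t ht
      have := hz t ht
      have : 0 ≤ a - x t := by linarith
      positivity
    positivity

/-- The triangle case, treated with an explicit Lyapunov function. -/
lemma Sol.conv_x_triangle {a l1 m l3 T d : ℝ} {x z : ℝ → ℝ} (h : Sol a l1 m l3 T d x z)
    (hm : 0 < m) (hz : ∀ t, T ≤ t → 0 < z t) (hx : ∀ t, T ≤ t → 0 < x t)
    (hx' : ∀ t, T ≤ t → 0 < 1 - x t) (hl : l3 ≤ l1 + (l1 + m)) (hml : m < l3) :
    ∃ p, Tendsto x atTop (nhds p) := by
  have ha0 := h.ha0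
  have ha1 : 0 < 1 - a := by linarith [h.ha1]
  have hl1 := h.hl1
  have hl3 := h.hl3
  have hlm : 0 < l3 - m := by linarith
  obtain ⟨e0, he0⟩ : ∃ e0, e0 = l1 * a * (m + l3) := ⟨_, rfl⟩
  obtain ⟨c, hc⟩ : ∃ c, c = l1 * a * (m + l3) + (1 - a) * (l1 + m) * (l3 - m) := ⟨_, rfl⟩
  have he0pos : 0 < e0 := by rw [he0]; positivity
  have hce : e0 < c := by
    have : 0 < (1 - a) * (l1 + m) * (l3 - m) := by positivity
    rw [he0, hc]; linarith
  have hcpos : 0 < c := by linarith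
  obtain ⟨p, hp⟩ : ∃ p, p = e0 / c := ⟨_, rfl⟩
  have hpc : c * p = e0 := by rw [hp]; field_simp
  have hp0 : 0 < p := by rw [hp]; positivity
  have hp1 : 0 < 1 - p := by
    have : p < 1 := by rw [hp, div_lt_one hcpos]; exact hce
    linarith
  have hpa : 0 ≤ p - a := by
    have h1 : c * (p - a) = m * (a * (1 - a)) * (l1 + (l1 + m) - l3) := by
      rw [mul_sub, hpc, he0, hc]; ring
    have h2 : 0 ≤ c * (p - a) := by
      rw [h1]
      have : 0 ≤ l1 + (l1 + m) - l3 := by linarith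
      positivity
    exact nonneg_of_mul_nonneg_right h2 hcpos
  obtain ⟨q, hq⟩ : ∃ q, q = l3 * (p - a) / m := ⟨_, rfl⟩
  have hq0 : 0 ≤ q := by rw [hq]; positivity
  have hmq : m * q = l3 * (p - a) := by rw [hq]; field_simp
  -- Lyapunov function
  let W : ℝ → ℝ := fun t => -(l3 * m) * x t - (l3 * l1 + c) * p * Real.log (x t)
    - (l3 * (l1 + m) + c) * (1 - p) * Real.log (1 - x t)
    + m ^ 2 * (z t - q * Real.log (z t))
  let W' : ℝ → ℝ := fun t => -((l1 + x t * m) * vv a m l3 (x t) (z t) ^ 2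
    + c * l3 * (x t - p) ^ 2) / den l1 m l3 (x t) (z t)
  have hW : ∀ t, T ≤ t → HasDerivWithinAt W (W' t) (Ici T) t := by
    intro t ht
    have dx := h.dx t ht
    have dz := h.dz t ht
    have h1 := hx t ht
    have h2 := hx' t ht
    have h3 := hz t ht
    have hD := h.dpos t ht
    have key := (((dx.const_mul (-(l3 * m))).sub ((dx.log h1.ne').const_mul
      ((l3 * l1 + c) * p))).sub (((dx.const_sub 1).log h2.ne').const_mul
      ((l3 * (l1 + m) + c) * (1 - p)))).add
      ((dz.sub ((dz.log h3.ne').const_mul q)).const_mul (m ^ 2))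
    refine key.congr_deriv ?_
    have hS : m * (src a l1 m (x t) - den l1 m l3 (x t) (z t))
        = - c * (x t - p) - (l1 + x t * m) * vv a m l3 (x t) (z t) := by
      have : - c * (x t - p) = e0 - c * x t := by rw [← hpc]; ring
      rw [this, he0, hc]
      unfold src den vv; ring
    have hv : m * (z t - q) = vv a m l3 (x t) (z t) + l3 * (x t - p) := by
      rw [mul_sub, hmq]; unfold vv; ring
    have e1 : W' t = ((l3 * (l1 + x t * m) + c) * (x t - p) * vv a m l3 (x t) (z t)
      + (m * (z t - q)) * (m * (src a l1 m (x t) - den l1 m l3 (x t) (z t))))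
        / den l1 m l3 (x t) (z t) := by
      rw [hS, hv]
      simp only [W']
      congr 1
      ring
    rw [e1]
    generalize den l1 m l3 (x t) (z t) = D at *
    generalize vv a m l3 (x t) (z t) = v at *
    generalize src a l1 m (x t) = s at *
    field_simp
    ring
  have hWlow : ∀ t, T ≤ t → -(l3 * m) ≤ W t := by
    intro t ht
    have h1 := hx t ht
    have h2 := hx' t ht
    have h3 := hz t ht
    have g1 : Real.log (x t) ≤ 0 := Real.log_nonpos h1.le (by linarith)
    have g2 : Real.log (1 - x t) ≤ 0 := Real.log_nonpos h2.le (by linarith)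
    have g3 : Real.log (z t) ≤ 0 := Real.log_nonpos h3.le (h.hz1 t ht)
    have k1 : (l3 * l1 + c) * p * Real.log (x t) ≤ 0 :=
      mul_nonpos_of_nonneg_of_nonpos (by positivity) g1
    have k2 : (l3 * (l1 + m) + c) * (1 - p) * Real.log (1 - x t) ≤ 0 :=
      mul_nonpos_of_nonneg_of_nonpos (by positivity) g2
    have k3 : q * Real.log (z t) ≤ 0 := mul_nonpos_of_nonneg_of_nonpos hq0 g3
    have k4 : 0 ≤ m ^ 2 * (z t - q * Real.log (z t)) :=
      mul_nonneg (by positivity) (by linarith)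
    have k5 : 0 ≤ l3 * m * (1 - x t) := by positivity
    simp only [W]
    linarith
  have hW'le : ∀ t, T ≤ t → W' t ≤ -(c * l3 * (x t - p) ^ 2 / den l1 m l3 (x t) (z t)) := by
    intro t ht
    have hD := h.dpos t ht
    have h1 := hx t ht
    simp only [W']
    rw [← neg_div]
    apply div_le_div_of_nonneg_right _ hD.le
    have : 0 ≤ (l1 + x t * m) * vv a m l3 (x t) (z t) ^ 2 := by positivity
    linarith
  obtain ⟨w, hw⟩ := conv_of_deriv_nonpos' W W' T _ hW hWlow (by
    intro t ht
    have hD := h.dpos t ht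
    have : 0 ≤ c * l3 * (x t - p) ^ 2 / den l1 m l3 (x t) (z t) := by positivity
    linarith [hW'le t ht])
  -- the cube of the displacement is dominated by the dissipation
  obtain ⟨C, hC⟩ : ∃ C, C = 3 * (l3 + m) / (c * l3) := ⟨_, rfl⟩
  have hC0 : 0 < C := by rw [hC]; positivity
  have hCc : C * (c * l3) = 3 * (l3 + m) := by rw [hC]; field_simp
  obtain ⟨g, hg⟩ := conv_of_deriv_nonpos' (fun t => (x t - p) ^ 3 + C * W t) _ T
    (-1 + C * (-(l3 * m)))
    (fun t ht => (((h.dx t ht).sub_const p).fun_pow 3).add ((hW t ht).const_mul C))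
    (by
      intro t ht
      have h1 := mul_le_mul_of_nonneg_left (hWlow t ht) hC0.le
      have h2 : (-1 : ℝ) ≤ (x t - p) ^ 3 := by
        have h3 : -1 ≤ x t - p := by linarith [hx t ht]
        have : (-1 : ℝ) ^ 3 ≤ (x t - p) ^ 3 := (Odd.strictMono_pow (by decide)).monotone h3
        linarith
      linarith)
    (by
      intro t ht
      have hD := h.dpos t ht
      have h1 := hx t ht
      have h2 := hx' t ht
      have h3 := mul_le_mul_of_nonneg_left (hW'le t ht) hC0.le
      have hv : vv a m l3 (x t) (z t) ≤ l3 + m := by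
        unfold vv
        have k1 : l3 * (a - x t) ≤ l3 * 1 :=
          mul_le_mul_of_nonneg_left (by linarith) (by linarith)
        have k2 : m * z t ≤ m * 1 := mul_le_mul_of_nonneg_left (h.hz1 t ht) hm.le
        linarith
      have hbv : x t * (1 - x t) * vv a m l3 (x t) (z t) ≤ l3 + m := by
        have hb0 : 0 ≤ x t * (1 - x t) := by positivity
        have hb1 : x t * (1 - x t) ≤ 1 := by nlinarith
        calc _ ≤ x t * (1 - x t) * (l3 + m) := mul_le_mul_of_nonneg_left hv hb0
          _ ≤ 1 * (l3 + m) := mul_le_mul_of_nonneg_right hb1 (by linarith)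
          _ = l3 + m := one_mul _
      have e1 : C * -(c * l3 * (x t - p) ^ 2 / den l1 m l3 (x t) (z t))
          = - (3 * (x t - p) ^ 2 * ((l3 + m) / den l1 m l3 (x t) (z t))) := by
        have : C * -(c * l3 * (x t - p) ^ 2 / den l1 m l3 (x t) (z t))
          = -((C * (c * l3)) * (x t - p) ^ 2 / den l1 m l3 (x t) (z t)) := by ring
        rw [this, hCc]; ring
      have h4 := div_le_div_of_nonneg_right hbv hD.le
      have h5 := mul_le_mul_of_nonneg_left h4 (show 0 ≤ 3 * (x t - p) ^ 2 by positivity)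
      rw [e1] at h3
      norm_num
      linarith)
  have hcube : Tendsto (fun t => (x t - p) ^ 3) atTop (nhds (g - C * w)) := by
    have := hg.sub (hw.const_mul C)
    simpa using this
  refine conv_of_levels x ({b | (b - p) ^ 3 ≠ g - C * w}) ?_ 0 1 T
    (fun t ht => ⟨h.hx0 t ht, h.hx1 t ht⟩) ?_
  · have : {b : ℝ | (b - p) ^ 3 ≠ g - C * w} = {b : ℝ | (b - p) ^ 3 = g - C * w}ᶜ := rfl
    rw [this]
    refine (Set.Subsingleton.countable ?_).dense_compl ℝ
    intro b hb b' hb'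
    have h1 : (b - p) ^ 3 = (b' - p) ^ 3 := by rw [hb, hb']
    have := (Odd.strictMono_pow (R := ℝ) (n := 3) (by decide)).injective h1
    linarith
  · intro l hl
    have hmono := Odd.strictMono_pow (R := ℝ) (n := 3) (by decide)
    rcases lt_or_gt_of_ne hl with hl | hl
    · right
      obtain ⟨T', hT'⟩ := eventually_atTop.1 (hcube.eventually (lt_mem_nhds hl))
      refine ⟨T', fun t ht => ?_⟩
      have := hmono.lt_iff_lt.1 (hT' t ht)
      linarith
    · left
      obtain ⟨T', hT'⟩ := eventually_atTop.1 (hcube.eventually (gt_mem_nhds hl))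
      refine ⟨T', fun t ht => ?_⟩
      have := hmono.lt_iff_lt.1 (hT' t ht)
      linarith

lemma abs_vv_le {a l1 m l3 T d : ℝ} {x z : ℝ → ℝ} (h : Sol a l1 m l3 T d x z) (t : ℝ)
    (ht : T ≤ t) : |vv a m l3 (x t) (z t)| ≤ l3 + m := by
  have hl3 := h.hl3
  have ha0 := h.ha0
  have ha1 := h.ha1
  have h1 := h.hx0 t ht
  have h2 := h.hx1 t ht
  have k1 : l3 * (a - x t) ≤ l3 * 1 := mul_le_mul_of_nonneg_left (by linarith) (by linarith)
  have k2 : l3 * (-1) ≤ l3 * (a - x t) := mul_le_mul_of_nonneg_left (by linarith) (by linarith)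
  have k3 : m * z t ≤ m * 1 := mul_le_mul_of_nonneg_left (h.hz1 t ht) h.hm
  have k4 : 0 ≤ m * z t := mul_nonneg h.hm (h.hz0 t ht)
  have := h.hm
  unfold vv
  rw [abs_le]
  constructor <;> linarith

/-- `b |v| / D ≤ b (l3 + m) / d` for `b ≥ 0`. -/
lemma rate_bound {b v D d M : ℝ} (hb : 0 ≤ b) (hv : |v| ≤ M) (hd : 0 < d) (hD : d ≤ D) :
    |b * v / D| ≤ M / d * b := by
  have hD0 : 0 < D := hd.trans_le hD
  have hM : 0 ≤ M := (abs_nonneg v).trans hv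
  rw [abs_div, abs_mul, abs_of_nonneg hb, abs_of_pos hD0]
  calc b * |v| / D ≤ b * M / D :=
        div_le_div_of_nonneg_right (mul_le_mul_of_nonneg_left hv hb) hD0.le
    _ ≤ b * M / d := div_le_div_of_nonneg_left (by positivity) hd hD
    _ = M / d * b := by ring

lemma Sol.conv_x {a l1 m l3 T d : ℝ} {x z : ℝ → ℝ} (h : Sol a l1 m l3 T d x z) :
    ∃ p, Tendsto x atTop (nhds p) := by
  have ha0 := h.ha0
  have ha1 : 0 < 1 - a := by linarith [h.ha1]
  have hl1 := h.hl1
  have hl3 := h.hl3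
  rcases h.hm.eq_or_lt with hm | hm
  · exact h.conv_x_decoupled (fun t _ => by rw [← hm, zero_mul])
  by_cases hz : ∃ s, T ≤ s ∧ 0 < z s
  swap
  · push Not at hz
    refine h.conv_x_decoupled (fun t ht => ?_)
    have : z t = 0 := le_antisymm (hz t ht) (h.hz0 t ht)
    rw [this, mul_zero]
  obtain ⟨s, hs, hzs⟩ := hz
  have hzpos := stay_pos z _ T 1 s h.dz (by
    intro t ht
    have hD := h.dpos t ht
    have h1 := h.hz0 t ht
    have h2 := h.hx0 t ht
    have h3 : 0 ≤ 1 - x t := by linarith [h.hx1 t ht]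
    have hS : 0 ≤ src a l1 m (x t) := by unfold src; positivity
    rw [le_div_iff₀ hD]
    have := mul_nonneg h1 hS
    linarith) hs hzs
  rcases le_or_gt l3 m with hlm | hlm
  · refine h.conv_x_of_ee_nonneg (fun t ht => ?_)
    have h2 := h.hx0 t ht
    have h3 : 0 ≤ 1 - x t := by linarith [h.hx1 t ht]
    have h4 : 0 ≤ m - l3 := by linarith
    have : ee a l1 m l3 (x t) = l1 * a * (m + l3) * (1 - x t)
        + (1 - a) * (l1 + m) * (m - l3) * x t := by unfold ee; ring
    rw [this]
    positivity
  rcases le_total (l1 + (l1 + m)) l3 with hl | hl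
  · exact (h.later hs).conv_x_long hm hzpos hl
  -- remaining: the triangle case
  by_cases hx : ∃ s', s ≤ s' ∧ 0 < x s'
  swap
  · push Not at hx
    refine ⟨0, tendsto_const_nhds.congr' ?_⟩
    filter_upwards [eventually_ge_atTop s] with t ht
    exact le_antisymm (h.hx0 t (hs.trans ht)) (hx t ht)
  obtain ⟨s1, hs1, hxs⟩ := hx
  have hxpos := stay_pos x _ T ((l3 + m) / d) s1 h.dx (by
    intro t ht
    have h2 := h.hx0 t ht
    have h3 : 0 ≤ 1 - x t := by linarith [h.hx1 t ht]
    have hb : 0 ≤ x t * (1 - x t) := by positivity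
    have h4 := (abs_le.1 (rate_bound hb (abs_vv_le h t ht) h.hd (h.hden t ht))).1
    have h5 : (l3 + m) / d * (x t * (1 - x t)) ≤ (l3 + m) / d * x t := by
      have := h.hd
      apply mul_le_mul_of_nonneg_left _ (by positivity)
      nlinarith
    linarith) (hs.trans hs1) hxs
  by_cases hx' : ∃ s', s1 ≤ s' ∧ 0 < 1 - x s'
  swap
  · push Not at hx'
    refine ⟨1, tendsto_const_nhds.congr' ?_⟩
    filter_upwards [eventually_ge_atTop s1] with t ht
    have := hx' t ht
    have := h.hx1 t (hs.trans (hs1.trans ht))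
    linarith
  obtain ⟨s2, hs2, hxs2⟩ := hx'
  have hs2' : T ≤ s2 := hs.trans (hs1.trans hs2)
  have hxpos' := stay_pos (fun t => 1 - x t) _ T ((l3 + m) / d) s2
    (fun t ht => (h.dx t ht).const_sub 1) (by
    intro t ht
    have h2 := h.hx0 t ht
    have h3 : 0 ≤ 1 - x t := by linarith [h.hx1 t ht]
    have hb : 0 ≤ x t * (1 - x t) := by positivity
    have h4 := (abs_le.1 (rate_bound hb (abs_vv_le h t ht) h.hd (h.hden t ht))).2
    have h5 : (l3 + m) / d * (x t * (1 - x t)) ≤ (l3 + m) / d * (1 - x t) := by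
      have := h.hd
      apply mul_le_mul_of_nonneg_left _ (by positivity)
      nlinarith
    linarith) hs2' hxs2
  exact (h.later hs2').conv_x_triangle hm (fun t ht => hzpos t (hs1.trans (hs2.trans ht)))
    (fun t ht => hxpos t (hs2.trans ht)) hxpos' hl hlm

/-- The denominator increases at small positive levels. -/
lemma den_deriv_pos {a l1 m l3 x z e : ℝ} (ha0 : e ≤ a) (ha1 : e ≤ 1 - a) (he : 0 < e)
    (hl1 : 1 ≤ l1) (hm : 0 ≤ m) (hl3 : 1 ≤ l3) (hx0 : 0 ≤ x) (hx1 : x ≤ 1) (hz0 : 0 ≤ z)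
    (hD : 0 < den l1 m l3 x z) (hDe : 4 * (1 + m) * den l1 m l3 x z ≤ e) :
    0 < z * (src a l1 m x - den l1 m l3 x z) * (l1 + x * m)
      + z * m * (x * (1 - x) * vv a m l3 x z)
      + l3 * ((1 - 2 * x) * (x * (1 - x) * vv a m l3 x z)) := by
  obtain ⟨D, hDD⟩ : ∃ D, D = den l1 m l3 x z := ⟨_, rfl⟩
  obtain ⟨b, hb⟩ : ∃ b, b = x * (1 - x) := ⟨_, rfl⟩
  have hx1' : 0 ≤ 1 - x := by linarith
  have hb0 : 0 ≤ b := by rw [hb]; positivity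
  have hL : 1 ≤ l1 + x * m := by nlinarith [mul_nonneg hx0 hm]
  have hDdef : D = z * (l1 + x * m) + l3 * b := by rw [hDD, hb]; rfl
  have hzL : 0 ≤ z * (l1 + x * m) := by positivity
  have hlb : l3 * b ≤ D := by linarith
  have hbD : b ≤ D := by nlinarith
  rw [← hDD] at hD hDe ⊢
  rw [← hb]
  have hmD : 0 ≤ m * D := by positivity
  have hS : e ≤ src a l1 m x := by
    unfold src
    have k1 : e * x ≤ (l1 + m) * (1 - a) * x := by
      apply mul_le_mul_of_nonneg_right _ hx0; nlinarith
    have k2 : e * (1 - x) ≤ l1 * a * (1 - x) := by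
      apply mul_le_mul_of_nonneg_right _ hx1'; nlinarith
    linarith
  -- first term
  have t1 : z * (e - D) ≤ z * (src a l1 m x - D) * (l1 + x * m) := by
    rw [mul_assoc]
    apply mul_le_mul_of_nonneg_left _ hz0
    have : 0 ≤ src a l1 m x - D := by linarith
    nlinarith
  have hvl : -l3 ≤ vv a m l3 x z := by
    unfold vv
    have := mul_nonneg hm hz0
    nlinarith
  have t2 : -(z * (m * D)) ≤ z * m * (b * vv a m l3 x z) := by
    have k1 : b * (-l3) ≤ b * vv a m l3 x z := mul_le_mul_of_nonneg_left hvl hb0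
    have k2 : -D ≤ b * vv a m l3 x z := by linarith
    have k3 := mul_le_mul_of_nonneg_left k2 (mul_nonneg hz0 hm)
    linarith
  have t3 : l3 ^ 2 * (b * ((1 - 2 * x) * (a - x))) - z * (m * D)
      ≤ l3 * ((1 - 2 * x) * (b * vv a m l3 x z)) := by
    have e1 : l3 * ((1 - 2 * x) * (b * vv a m l3 x z))
        = l3 ^ 2 * (b * ((1 - 2 * x) * (a - x))) + (l3 * b) * ((z * m) * (1 - 2 * x)) := by
      unfold vv; ring
    have hzm : 0 ≤ z * m := mul_nonneg hz0 hm
    have k1 : (z * m) * (-1) ≤ (z * m) * (1 - 2 * x) :=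
      mul_le_mul_of_nonneg_left (by linarith) hzm
    have k2 : (l3 * b) * ((z * m) * (-1)) ≤ (l3 * b) * ((z * m) * (1 - 2 * x)) :=
      mul_le_mul_of_nonneg_left k1 (by positivity)
    have k3 := mul_le_mul_of_nonneg_right hlb hzm
    rw [e1]
    linarith
  have hpos : 0 < (1 - 2 * x) * (a - x) := by
    have hb4 : 4 * b ≤ e := by linarith
    rcases le_total x (1 / 2) with hx | hx
    · have : x / 2 ≤ b := by rw [hb]; nlinarith
      have : x ≤ e / 2 := by linarith
      exact mul_pos (by linarith) (by linarith)
    · have : (1 - x) / 2 ≤ b := by rw [hb]; nlinarith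
      have : 1 - x ≤ e / 2 := by linarith
      exact mul_pos_of_neg_of_neg (by linarith) (by linarith)
  have hfac : 0 < e - D - 2 * (m * D) := by linarith
  have tot : z * (e - D - 2 * (m * D)) + l3 ^ 2 * (b * ((1 - 2 * x) * (a - x)))
      ≤ z * (src a l1 m x - D) * (l1 + x * m) + z * m * (b * vv a m l3 x z)
        + l3 * ((1 - 2 * x) * (b * vv a m l3 x z)) := by linarith
  refine lt_of_lt_of_le ?_ tot
  rcases hz0.eq_or_lt with hz | hz
  · have hbp : 0 < b := by
      rcases hb0.eq_or_lt with hb' | hb'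
      · rw [hDdef, ← hz, ← hb'] at hD
        simp at hD
      · exact hb'
    rw [← hz]
    have : 0 < l3 ^ 2 * (b * ((1 - 2 * x) * (a - x))) := by positivity
    linarith
  · have : 0 < z * (e - D - 2 * (m * D)) := mul_pos hz hfac
    have : 0 ≤ l3 ^ 2 * (b * ((1 - 2 * x) * (a - x))) := by positivity
    linarith

end Ants

/-- Every solution `y : [0,∞) → [0,1]²` of the ODE `ẏ = F(y)`, where `F = (F1, F3)` is
the vector field of the stochastic approximation associated with the two-nest ants
process on the `(ℓ1,ℓ2,ℓ3)`-triangle (with the convention `F = 0` where the common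
denominator `D` vanishes), converges as `t → ∞`. -/
theorem statement14 (α ℓ1 ℓ2 ℓ3 : ℝ) (hα : α ∈ Set.Ioo (0:ℝ) 1)
    (h1 : 1 ≤ ℓ1) (h2 : 1 ≤ ℓ2) (h3 : 1 ≤ ℓ3) (h12 : ℓ1 ≤ ℓ2)
    (F : ℝ × ℝ → ℝ × ℝ)
    (hF : ∀ w : ℝ × ℝ,
      F w = if w.2 * (ℓ1 + w.1 * (ℓ2 - ℓ1)) + ℓ3 * w.1 * (1 - w.1) = 0 then 0
        else
          (w.1 * (1 - w.1) * (ℓ3 * (α - w.1) + (ℓ2 - ℓ1) * w.2)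
              / (w.2 * (ℓ1 + w.1 * (ℓ2 - ℓ1)) + ℓ3 * w.1 * (1 - w.1)),
            w.2 * (ℓ2 * (1 - α) * w.1 + ℓ1 * α * (1 - w.1) - ℓ3 * w.1 * (1 - w.1)
                    - w.2 * (ℓ1 + w.1 * (ℓ2 - ℓ1)))
              / (w.2 * (ℓ1 + w.1 * (ℓ2 - ℓ1)) + ℓ3 * w.1 * (1 - w.1))))
    (y : ℝ → ℝ × ℝ)
    (hy_mem : ∀ t, 0 ≤ t → y t ∈ Set.Icc (0:ℝ) 1 ×ˢ Set.Icc (0:ℝ) 1)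
    (hy_deriv : ∀ t, 0 ≤ t → HasDerivWithinAt y (F (y t)) (Set.Ici 0) t) :
    ∃ p : ℝ × ℝ, Tendsto y atTop (nhds p) := by
  obtain ⟨m, rfl⟩ : ∃ m, ℓ2 = ℓ1 + m := ⟨ℓ2 - ℓ1, by ring⟩
  have hm : 0 ≤ m := by linarith
  have hα0 := hα.1
  have hα1 := hα.2
  have hDen : ∀ w : ℝ × ℝ, w.2 * (ℓ1 + w.1 * (ℓ1 + m - ℓ1)) + ℓ3 * w.1 * (1 - w.1)
      = Ants.den ℓ1 m ℓ3 w.1 w.2 := by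
    intro w; unfold Ants.den; ring
  simp only [hDen] at hF
  have hx0 : ∀ t, 0 ≤ t → 0 ≤ (y t).1 := fun t ht => (hy_mem t ht).1.1
  have hx1 : ∀ t, 0 ≤ t → (y t).1 ≤ 1 := fun t ht => (hy_mem t ht).1.2
  have hz0 : ∀ t, 0 ≤ t → 0 ≤ (y t).2 := fun t ht => (hy_mem t ht).2.1
  have hz1 : ∀ t, 0 ≤ t → (y t).2 ≤ 1 := fun t ht => (hy_mem t ht).2.2
  have hDnn : ∀ t, 0 ≤ t → 0 ≤ Ants.den ℓ1 m ℓ3 (y t).1 (y t).2 := by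
    intro t ht
    have h4 := hx0 t ht
    have h5 : 0 ≤ 1 - (y t).1 := by linarith [hx1 t ht]
    have h6 := hz0 t ht
    unfold Ants.den
    positivity
  have hfst : ∀ t, 0 ≤ t → HasDerivWithinAt (fun t => (y t).1) (F (y t)).1 (Set.Ici 0) t :=
    fun t ht => (ContinuousLinearMap.fst ℝ ℝ ℝ).hasFDerivAt.comp_hasDerivWithinAt t (hy_deriv t ht)
  have hsnd : ∀ t, 0 ≤ t → HasDerivWithinAt (fun t => (y t).2) (F (y t)).2 (Set.Ici 0) t :=
    fun t ht => (ContinuousLinearMap.snd ℝ ℝ ℝ).hasFDerivAt.comp_hasDerivWithinAt t (hy_deriv t ht)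
  by_cases hex : ∃ s, 0 ≤ s ∧ 0 < Ants.den ℓ1 m ℓ3 (y s).1 (y s).2
  swap
  · push Not at hex
    have hF0 : ∀ t, 0 ≤ t → F (y t) = 0 := by
      intro t ht
      rw [hF, if_pos (le_antisymm (hex t ht) (hDnn t ht))]
    refine ⟨y 0, tendsto_const_nhds.congr' ?_⟩
    filter_upwards [eventually_ge_atTop 0] with t ht
    refine (constant_of_has_deriv_right_zero (f := y) (a := 0) (b := t) ?_ ?_ t
      ⟨ht, le_rfl⟩).symm
    · intro u hu
      exact (hy_deriv u hu.1).continuousWithinAt.mono (fun w hw => hw.1)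
    · intro u hu
      have := (hy_deriv u hu.1).mono (Set.Ici_subset_Ici.2 hu.1)
      rwa [hF0 u hu.1] at this
  obtain ⟨s, hs, hDs⟩ := hex
  -- values of the field where the denominator is positive
  have hF1 : ∀ w : ℝ × ℝ, 0 < Ants.den ℓ1 m ℓ3 w.1 w.2 → (F w).1
      = w.1 * (1 - w.1) * Ants.vv α m ℓ3 w.1 w.2 / Ants.den ℓ1 m ℓ3 w.1 w.2 := by
    intro w hw
    rw [hF, if_neg hw.ne']
    simp only [Ants.vv]
    ring
  have hF2 : ∀ w : ℝ × ℝ, 0 < Ants.den ℓ1 m ℓ3 w.1 w.2 → (F w).2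
      = w.2 * (Ants.src α ℓ1 m w.1 - Ants.den ℓ1 m ℓ3 w.1 w.2)
        / Ants.den ℓ1 m ℓ3 w.1 w.2 := by
    intro w hw
    rw [hF, if_neg hw.ne']
    dsimp only
    congr 1
    unfold Ants.src Ants.den
    ring
  obtain ⟨e, he⟩ : ∃ e, e = min α (1 - α) := ⟨_, rfl⟩
  have he0 : 0 < e := by rw [he]; exact lt_min hα0 (by linarith)
  obtain ⟨d, hd⟩ : ∃ d, d = min (Ants.den ℓ1 m ℓ3 (y s).1 (y s).2) (e / (4 * (1 + m))) :=
    ⟨_, rfl⟩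
  have hd0 : 0 < d := by rw [hd]; exact lt_min hDs (by positivity)
  have hde : 4 * (1 + m) * d ≤ e := by
    have : d ≤ e / (4 * (1 + m)) := by rw [hd]; exact min_le_right _ _
    rw [le_div_iff₀ (by positivity)] at this
    linarith
  have hdD : ∀ t, 0 ≤ t → HasDerivWithinAt (fun t => Ants.den ℓ1 m ℓ3 (y t).1 (y t).2)
      ((F (y t)).2 * (ℓ1 + (y t).1 * m) + (y t).2 * ((F (y t)).1 * m)
        + ℓ3 * ((F (y t)).1 * (1 - (y t).1) + (y t).1 * (-(F (y t)).1))) (Set.Ici 0) t := by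
    intro t ht
    have k1 := hfst t ht
    have k2 := hsnd t ht
    exact (k2.mul ((k1.mul_const m).const_add ℓ1)).add
      ((k1.mul (k1.const_sub 1)).const_mul ℓ3)
  have hlow := Ants.level_pos _ _ 0 d s hdD (by
    intro t ht heq
    have ht0 : 0 ≤ t := hs.trans ht
    have hDt : 0 < Ants.den ℓ1 m ℓ3 (y t).1 (y t).2 := by
      have : Ants.den ℓ1 m ℓ3 (y t).1 (y t).2 = d := heq
      rw [this]; exact hd0
    have key := Ants.den_deriv_pos (a := α) (e := e) (by rw [he]; exact min_le_left _ _)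
      (by rw [he]; exact min_le_right _ _) he0 h1 hm h3 (hx0 t ht0) (hx1 t ht0) (hz0 t ht0)
      hDt (by
        have : Ants.den ℓ1 m ℓ3 (y t).1 (y t).2 = d := heq
        rw [this]; exact hde)
    have k2 := div_pos key hDt
    rw [hF1 _ hDt, hF2 _ hDt]
    refine lt_of_lt_of_eq k2 ?_
    ring) hs (by rw [hd]; exact min_le_left _ _)
  have hsol : Ants.Sol α ℓ1 m ℓ3 s d (fun t => (y t).1) (fun t => (y t).2) :=
    { ha0 := hα0
      ha1 := hα1
      hl1 := h1
      hm := hm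
      hl3 := h3
      hd := hd0
      hx0 := fun t ht => hx0 t (hs.trans ht)
      hx1 := fun t ht => hx1 t (hs.trans ht)
      hz0 := fun t ht => hz0 t (hs.trans ht)
      hz1 := fun t ht => hz1 t (hs.trans ht)
      hden := hlow
      dx := fun t ht => by
        have := (hfst t (hs.trans ht)).mono (Set.Ici_subset_Ici.2 hs)
        rwa [hF1 _ (hd0.trans_le (hlow t ht))] at this
      dz := fun t ht => by
        have := (hsnd t (hs.trans ht)).mono (Set.Ici_subset_Ici.2 hs)
        rwa [hF2 _ (hd0.trans_le (hlow t ht))] at this }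
  obtain ⟨p, hp⟩ := hsol.conv_x
  obtain ⟨q, hq⟩ := hsol.conv_z ⟨p, hp⟩
  exact ⟨(p, q), hp.prodMk_nhds hq⟩
end

section
/- Fix α ∈ (0,1) and positive reals ℓ1 ≤ ℓ2 and ℓ3 > 0. Then for all reals w1 ∈ (0,α) and w3 ∈ [0,1], (α·ℓ3·w1·(1−w1) + ℓ2·w1·w3)/(ℓ3·w1·(1−w1) + ℓ2·w1·w3 + ℓ1·(1−w1)·w3) > w1. -/
/-- Strict domination of the identity by `p1(w1, 1-w1, w3)` on `w1 ∈ (0, α)`: the key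
step showing that the normalized reinforcement count of branch 1 of the
`(ℓ1,ℓ2,ℓ3)`-triangle has liminf at least `α`. -/
theorem statement15 (α ℓ1 ℓ2 ℓ3 : ℝ) (hα : α ∈ Set.Ioo (0:ℝ) 1)
    (h1 : 0 < ℓ1) (h2 : 0 < ℓ2) (h12 : ℓ1 ≤ ℓ2) (h3 : 0 < ℓ3)
    (w1 w3 : ℝ) (hw1 : w1 ∈ Set.Ioo 0 α) (hw3 : w3 ∈ Set.Icc (0:ℝ) 1) :
    w1 < (α * ℓ3 * w1 * (1 - w1) + ℓ2 * w1 * w3)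
        / (ℓ3 * w1 * (1 - w1) + ℓ2 * w1 * w3 + ℓ1 * (1 - w1) * w3) := by
  obtain ⟨hα0, hα1⟩ := hα
  obtain ⟨hw0, hwα⟩ := hw1
  obtain ⟨hw30, hw31⟩ := hw3
  have hs : 0 < 1 - w1 := by linarith
  have hd : 0 < α - w1 := by linarith
  have hl : 0 ≤ ℓ2 - ℓ1 := by linarith
  have hD : 0 < ℓ3 * w1 * (1 - w1) + ℓ2 * w1 * w3 + ℓ1 * (1 - w1) * w3 := by positivity
  rw [lt_div_iff₀ hD]
  have hA : 0 < ℓ3 * w1 * (1 - w1) * (α - w1) := by positivity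
  have hB : 0 ≤ w1 * w3 * (1 - w1) * (ℓ2 - ℓ1) := by positivity
  linarith
end
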